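/- (Univariate order–degree curve for contraction ideals, differential case, one removable operator.) Let L = Σ_{i=0}^{ρ} (l_i·)∘D^i with l_i ∈ C[x] and l_ρ ≠ 0, and set d_L = max_i deg l_i. Let L_1 = Σ_{i=0}^{ρ_1} (l'_i·)∘D^i with l'_i ∈ C[x] and l'_{ρ_1} ≠ 0, where ρ_1 > ρ. Let p ∈ C[x] be nonzero and let P = Σ_{i=0}^{s} (P_i·)∘D^i with P_i ∈ C[x] and P_s ≠ 0, such that (p·)∘L_1 = P∘L as C-linear endomorphisms of C(x), and suppose deg p > deg P_s. Let r, d ∈ ℕ with r ≥ ρ_1 and (r + 1 − ρ)·(d − d_L) + (r + 1 − ρ_1)·(deg p − deg P_s) ≥ 0, i.e. d ≥ d_L − (1 − (ρ_1 − ρ)/(r + 1 − ρ))·(deg p − deg P_s). Then there exist polynomials b_0, …, b_r ∈ C[x], not all zero, with deg b_i ≤ d, and rational functions q_0, …, q_{r−ρ} ∈ C(x), such that Σ_{i=0}^{r} (b_i·)∘D^i = (Σ_{j=0}^{r−ρ} (q_j·)∘D^j) ∘ L as C-linear endomorphisms of C(x); that is, the contraction ideal Con⟨L⟩ = ⟨L⟩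 ∩ C[x][D] contains a nonzero element of order at most r and degree at most d. -/

import Mathlib

noncomputable section

/-- `C(x)`, the fraction field of `C[x]`. -/
abbrev K1 (C : Type*) [Field C] := FractionRing (Polynomial C)

/-- The canonical embedding `C[x] → C(x)`. -/
def embK1 {C : Type*} [Field C] (f : Polynomial C) : K1 C :=
  algebraMap (Polynomial C) (K1 C) f

/-- Multiplication by `q ∈ C(x)` as a `C`-linear endomorphism of `C(x)`. -/
def mulK1 {C : Type*} [Field C] (q : K1 C) : Module.End C (K1 C) :=
  LinearMap.mulLeft C q

/-- The operator `Σ_{i=0}^{n} (q_i ·) ∘ D^i` as a `C`-linear endomorphism of `C(x)`. -/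
def opK1 {C : Type*} [Field C] (D : Module.End C (K1 C)) (q : ℕ → K1 C) (n : ℕ) :
    Module.End C (K1 C) :=
  ∑ i ∈ Finset.range (n + 1), mulK1 (q i) ∘ₗ (D ^ i)

section Auxiliary

open Polynomial

section Operators

variable {C K : Type*} [Field C] [Field K] [Algebra C K]

/-- The operators `∑ i < n, a i • D ^ i` with coefficients `a i` in a subspace `T`. -/
def coeffOps (D : Module.End C K) (T : Submodule C K) (n : ℕ) :
    Submodule C (Module.End C K) where
  carrier := {A | ∃ a : ℕ → K, (∀ i, a i ∈ T) ∧ A = ∑ i ∈ Finset.range n, a i • D ^ i}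
  add_mem' := by
    rintro _ _ ⟨a, ha, rfl⟩ ⟨b, hb, rfl⟩
    exact ⟨a + b, fun i => T.add_mem (ha i) (hb i), by
      simp [add_smul, Finset.sum_add_distrib]⟩
  zero_mem' := ⟨0, fun _ => T.zero_mem, by simp⟩
  smul_mem' := by
    rintro c _ ⟨a, ha, rfl⟩
    exact ⟨c • a, fun i => T.smul_mem c (ha i), by simp [Finset.smul_sum]⟩

theorem smul_pow_mem_coeffOps (D : Module.End C K) {T : Submodule C K} {n i : ℕ} (hi : i < n)
    {f : K} (hf : f ∈ T) : f • D ^ i ∈ coeffOps D T n := by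
  refine ⟨Pi.single i f, fun j => ?_, ?_⟩
  · by_cases h : j = i
    · subst h; simpa using hf
    · simp [h]
  · rw [Finset.sum_eq_single i]
    · simp
    · intro j _ hj; simp [hj]
    · intro h; simp at h; omega

theorem coeffOps_mono (D : Module.End C K) (T : Submodule C K) {m n : ℕ} (h : m ≤ n) :
    coeffOps D T m ≤ coeffOps D T n := by
  rintro _ ⟨a, ha, rfl⟩
  exact Submodule.sum_mem _ fun i hi =>
    smul_pow_mem_coeffOps D ((Finset.mem_range.1 hi).trans_le h) (ha i)

theorem smul_mem_coeffOps {D : Module.End C K} {T T' : Submodule C K} {n : ℕ} {k : K}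
    (hk : ∀ t ∈ T, k * t ∈ T') {A : Module.End C K} (hA : A ∈ coeffOps D T n) :
    k • A ∈ coeffOps D T' n := by
  obtain ⟨a, ha, rfl⟩ := hA
  exact ⟨fun i => k * a i, fun i => hk _ (ha i), by simp [Finset.smul_sum, mul_smul]⟩

theorem mul_smul_pow_of_leibniz {D : Module.End C K} (hD : ∀ a b, D (a * b) = a * D b + D a * b)
    (f : K) (A : Module.End C K) : D * (f • A) = f • (D * A) + D f • A := by
  ext x
  simp [hD]

theorem mul_mem_coeffOps {D : Module.End C K} (hD : ∀ a b, D (a * b) = a * D b + D a * b)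
    {T : Submodule C K} (hT : ∀ t ∈ T, D t ∈ T) {n : ℕ} {A : Module.End C K}
    (hA : A ∈ coeffOps D T n) : D * A ∈ coeffOps D T (n + 1) := by
  obtain ⟨a, ha, rfl⟩ := hA
  rw [Finset.mul_sum]
  refine Submodule.sum_mem _ fun i hi => ?_
  have hi := Finset.mem_range.1 hi
  rw [mul_smul_pow_of_leibniz hD, ← pow_succ']
  exact Submodule.add_mem _ (smul_pow_mem_coeffOps D (by omega) (ha i))
    (smul_pow_mem_coeffOps D (by omega) (hT _ (ha i)))

theorem pow_mul_mem_coeffOps {D : Module.End C K} (hD : ∀ a b, D (a * b) = a * D b + D a * b)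
    {T : Submodule C K} (hT : ∀ t ∈ T, D t ∈ T) {n : ℕ} {A : Module.End C K}
    (hA : A ∈ coeffOps D T n) (j : ℕ) : D ^ j * A ∈ coeffOps D T (n + j) := by
  induction j with
  | zero => simpa using hA
  | succ j ih =>
    rw [pow_succ', mul_assoc]
    exact mul_mem_coeffOps hD hT ih

/-- The operator `A` has order at most `n`, and `c` is its coefficient at `D ^ n`. -/
def HasLead (D A : Module.End C K) (n : ℕ) (c : K) : Prop :=
  A - c • D ^ n ∈ coeffOps D ⊤ n

theorem HasLead.mem_coeffOps {D A : Module.End C K} {n : ℕ} {c : K} (h : HasLead D A n c) :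
    A ∈ coeffOps D ⊤ (n + 1) := by
  have := Submodule.add_mem _ (coeffOps_mono D ⊤ (Nat.le_succ n) h)
    (smul_pow_mem_coeffOps D (Nat.lt_succ_self n) (Submodule.mem_top (x := c)))
  simpa using this

theorem hasLead_sum (D : Module.End C K) (a : ℕ → K) (n : ℕ) :
    HasLead D (∑ i ∈ Finset.range (n + 1), a i • D ^ i) n (a n) :=
  ⟨a, fun _ => Submodule.mem_top, by rw [Finset.sum_range_succ]; simp⟩

theorem HasLead.exists_coeff {D A : Module.End C K} {n : ℕ} {c : K} (h : HasLead D A n c) :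
    ∃ a : ℕ → K, a n = c ∧ A = ∑ i ∈ Finset.range (n + 1), a i • D ^ i := by
  obtain ⟨a, -, ha⟩ := h
  refine ⟨Function.update a n c, by simp, ?_⟩
  rw [Finset.sum_range_succ, Function.update_self, ← sub_eq_iff_eq_add, ha]
  refine Finset.sum_congr rfl fun i hi => ?_
  rw [Function.update_of_ne (Finset.mem_range.1 hi).ne]

theorem HasLead.smul {D A : Module.End C K} {n : ℕ} {c : K} (h : HasLead D A n c) (k : K) :
    HasLead D (k • A) n (k * c) := by
  have := smul_mem_coeffOps (T' := ⊤) (k := k) (fun _ _ => Submodule.mem_top) h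
  rwa [smul_sub, ← mul_smul] at this

theorem HasLead.add {D A B : Module.End C K} {n : ℕ} {c : K} (h : HasLead D A n c)
    (hB : B ∈ coeffOps D ⊤ n) : HasLead D (A + B) n c := by
  have := Submodule.add_mem _ h hB
  rwa [sub_add_eq_add_sub] at this

theorem HasLead.pow_mul {D A : Module.End C K} (hD : ∀ a b, D (a * b) = a * D b + D a * b)
    {n : ℕ} {c : K} (h : HasLead D A n c) (j : ℕ) : HasLead D (D ^ j * A) (n + j) c := by
  induction j with
  | zero => simpa using h
  | succ j ih =>
    have h1 := Submodule.add_mem _ (mul_mem_coeffOps hD (fun _ _ => Submodule.mem_top) ih)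
      (smul_pow_mem_coeffOps D (Nat.lt_succ_self (n + j)) (Submodule.mem_top (x := D c)))
    rw [mul_sub, mul_smul_pow_of_leibniz hD, ← pow_succ', sub_add_eq_sub_sub, sub_add_cancel,
      ← mul_assoc, ← pow_succ'] at h1
    exact h1

theorem HasLead.mul {D A B : Module.End C K} (hD : ∀ a b, D (a * b) = a * D b + D a * b)
    {m n : ℕ} {a b : K} (hA : HasLead D A m a) (hB : HasLead D B n b) :
    HasLead D (A * B) (m + n) (a * b) := by
  obtain ⟨u, rfl, rfl⟩ := hA.exists_coeff
  rw [Finset.sum_range_succ, add_mul, add_comm (Finset.sum _ _ * B), smul_mul_assoc, add_comm m]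
  refine ((hB.pow_mul hD m).smul _).add ?_
  rw [Finset.sum_mul]
  refine Submodule.sum_mem _ fun i hi => ?_
  have hi := Finset.mem_range.1 hi
  rw [smul_mul_assoc]
  exact smul_mem_coeffOps (T := ⊤) (fun _ _ => Submodule.mem_top) (coeffOps_mono D ⊤ (by omega)
    (pow_mul_mem_coeffOps hD (fun _ _ => Submodule.mem_top) hB.mem_coeffOps i))

theorem pow_apply_pow_of_leibniz {D : Module.End C K}
    (hD : ∀ a b, D (a * b) = a * D b + D a * b) {t : K} (ht : D t = 1) (i : ℕ) :
    (D ^ i) (t ^ i) = i.factorial := by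
  have h (n : ℕ) : D (t ^ (n + 1)) = (n + 1) • t ^ n := by
    induction n with
    | zero => simp [ht]
    | succ n ih =>
      rw [pow_succ, hD, ih, ht]
      simp only [nsmul_eq_mul]
      push_cast
      ring
  induction i with
  | zero => simp
  | succ i ih =>
    rw [pow_succ, Module.End.mul_apply, h, map_nsmul, ih, Nat.factorial_succ, nsmul_eq_mul]
    push_cast
    ring

theorem coeff_eq_zero_of_sum_smul_pow_eq_zero [CharZero K] {D : Module.End C K}
    (hD : ∀ a b, D (a * b) = a * D b + D a * b) {t : K} (ht : D t = 1) {n : ℕ} {a : ℕ → K}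
    (h : ∑ i ∈ Finset.range n, a i • D ^ i = 0) : ∀ i < n, a i = 0 := by
  have h1 : D 1 = 0 := by simpa using hD 1 1
  have hnat (m : ℕ) : D (m : K) = 0 := by
    rw [← nsmul_one, map_nsmul, h1, smul_zero]
  intro i
  induction i using Nat.strong_induction_on with
  | _ i ih =>
    intro hi
    have h2 := congrArg (fun A : Module.End C K => A (t ^ i)) h
    simp only [LinearMap.sum_apply, LinearMap.smul_apply, LinearMap.zero_apply] at h2
    rw [Finset.sum_eq_single i] at h2
    · rw [pow_apply_pow_of_leibniz hD ht, smul_eq_mul, mul_eq_zero] at h2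
      exact h2.resolve_right (Nat.cast_ne_zero.2 i.factorial_ne_zero)
    · intro j hj hji
      rcases lt_or_gt_of_ne hji with hlt | hgt
      · rw [ih j hlt (Finset.mem_range.1 hj), zero_smul]
      · obtain ⟨k, rfl⟩ := Nat.exists_eq_add_of_lt hgt
        rw [show i + k + 1 = k + 1 + i by ring, pow_add, Module.End.mul_apply,
          pow_apply_pow_of_leibniz hD ht, pow_succ, Module.End.mul_apply, hnat, map_zero, smul_zero]
    · intro h3; exact absurd (Finset.mem_range.2 hi) h3

theorem coeff_eq_of_sum_smul_pow_eq [CharZero K] {D : Module.End C K}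
    (hD : ∀ a b, D (a * b) = a * D b + D a * b) {t : K} (ht : D t = 1) {n : ℕ} {a b : ℕ → K}
    (h : ∑ i ∈ Finset.range n, a i • D ^ i = ∑ i ∈ Finset.range n, b i • D ^ i) :
    ∀ i < n, a i = b i := by
  have h1 : ∑ i ∈ Finset.range n, (a i - b i) • D ^ i = 0 := by
    have h2 (i : ℕ) : (a i - b i) • D ^ i = a i • D ^ i - b i • D ^ i :=
      LinearMap.ext fun x => sub_mul (a i) (b i) ((D ^ i) x)
    simp_rw [h2]
    rw [Finset.sum_sub_distrib, h, sub_self]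
  exact fun i hi => sub_eq_zero.1 (coeff_eq_zero_of_sum_smul_pow_eq_zero hD ht h1 i hi)

theorem HasLead.ne_zero [CharZero K] {D A : Module.End C K}
    (hD : ∀ a b, D (a * b) = a * D b + D a * b) {t : K} (ht : D t = 1) {n : ℕ} {c : K}
    (h : HasLead D A n c) (hc : c ≠ 0) : A ≠ 0 := by
  obtain ⟨a, rfl, rfl⟩ := h.exists_coeff
  exact fun h0 => hc (coeff_eq_zero_of_sum_smul_pow_eq_zero hD ht h0 n n.lt_succ_self)

theorem exists_hasLead_of_ne_zero {D A : Module.End C K} {n : ℕ} (hA : A ∈ coeffOps D ⊤ n)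
    (h0 : A ≠ 0) : ∃ m c, c ≠ 0 ∧ HasLead D A m c := by
  obtain ⟨a, -, rfl⟩ := hA
  induction n with
  | zero => simp at h0
  | succ n ih =>
    by_cases hn : a n = 0
    · rw [Finset.sum_range_succ, hn, zero_smul, add_zero] at h0 ⊢
      exact ih h0
    · exact ⟨n, a n, hn, hasLead_sum D a n⟩

theorem HasLead.le_of_hasLead [CharZero K] {D A : Module.End C K}
    (hD : ∀ a b, D (a * b) = a * D b + D a * b) {t : K} (ht : D t = 1) {m n : ℕ} {b c : K}
    (hb : HasLead D A m b) (hc : HasLead D A n c) (hc0 : c ≠ 0) : n ≤ m := by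
  by_contra! hlt
  have h1 : HasLead D (A - A) n c := by
    rw [sub_eq_add_neg]
    exact hc.add (Submodule.neg_mem _ (coeffOps_mono D ⊤ hlt hb.mem_coeffOps))
  exact h1.ne_zero hD ht hc0 (sub_self A)

end Operators

section Lattice

variable {F : Type*} [Field F]

theorem exists_map_mem_span_of_sum_natDegree_lt_finrank (v : ℕ → ℕ → F[X]) (N : ℕ)
    (hv : ∀ j < N, ∀ i, j < i → v j i = 0) (hv0 : ∀ j < N, v j j ≠ 0)
    {E : Type*} [AddCommGroup E] [Module F E] [FiniteDimensional F E]
    (f : E →ₗ[F] (ℕ → F[X])) (hf : ∀ e i, N ≤ i → f e i = 0)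
    (hdim : ∑ j ∈ Finset.range N, (v j j).natDegree < Module.finrank F E) :
    ∃ e, e ≠ 0 ∧ f e ∈ Submodule.span F[X] (v '' Set.Iio N) := by
  induction N generalizing E with
  | zero =>
    rw [Finset.range_zero, Finset.sum_empty] at hdim
    have := Module.nontrivial_of_finrank_pos hdim
    obtain ⟨e, he⟩ := exists_ne (0 : E)
    refine ⟨e, he, ?_⟩
    rw [show f e = 0 from funext fun i => hf e i i.zero_le]
    exact Submodule.zero_mem _
  | succ N ih =>
    have hN := hv0 N N.lt_succ_self
    rw [Finset.sum_range_succ] at hdim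
    set c := v N N with hc
    have hu : (c * C c.leadingCoeff⁻¹).Monic := monic_mul_leadingCoeff_inv hN
    let g : E →ₗ[F] degreeLT F c.natDegree :=
      (modByMonicHom (c * C c.leadingCoeff⁻¹) ∘ₗ LinearMap.proj N ∘ₗ f).codRestrict _ fun e => by
        rw [mem_degreeLT, ← degree_eq_natDegree hN]
        exact degree_mod_lt (f e N) hN
    have hg : Module.finrank F (degreeLT F c.natDegree) = c.natDegree := by
      rw [(degreeLTEquiv F _).finrank_eq, Module.finrank_fin_fun]
    have : FiniteDimensional F (degreeLT F c.natDegree) :=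
      Module.Finite.equiv (degreeLTEquiv F _).symm
    have hker : ∑ j ∈ Finset.range N, (v j j).natDegree < Module.finrank F (LinearMap.ker g) := by
      have h1 := LinearMap.finrank_range_add_finrank_ker g
      have h2 := Submodule.finrank_le (LinearMap.range g)
      omega
    have hdvd (e : LinearMap.ker g) : ∃ a, f e N = c * a := by
      have h1 : f e N % c = 0 := congrArg Subtype.val (LinearMap.mem_ker.1 e.2)
      exact (EuclideanDomain.mod_eq_zero.1 h1)
    choose a ha using hdvd
    let φ : LinearMap.ker g →ₗ[F] (ℕ → F[X]) :=
      { toFun := fun e => f e - a e • v N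
        map_add' := fun x y => by
          have : a (x + y) = a x + a y := mul_left_cancel₀ hN <| by
            rw [← ha, mul_add, ← ha, ← ha]; simp
          rw [this, Submodule.coe_add, map_add, add_smul]
          abel
        map_smul' := fun k x => by
          have : a (k • x) = k • a x := mul_left_cancel₀ hN <| by
            rw [← ha, mul_smul_comm, ← ha]; simp
          rw [this, Submodule.coe_smul, map_smul, smul_assoc, RingHom.id_apply, smul_sub] }
    have hφ (e i) (hi : N ≤ i) : φ e i = 0 := by
      change f e i - a e * v N i = 0
      rcases hi.eq_or_lt with rfl | hlt
      · rw [ha, ← hc, mul_comm, sub_self]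
      · rw [hf _ _ hlt, hv N N.lt_succ_self i hlt, mul_zero, sub_zero]
    obtain ⟨e, he, hmem⟩ := ih (fun j hj => hv j (by omega)) (fun j hj => hv0 j (by omega)) φ hφ
      hker
    refine ⟨e, fun h => he (Subtype.ext h), ?_⟩
    rw [show f e = φ e + a e • v N from (sub_add_cancel _ _).symm]
    refine Submodule.add_mem _ (Submodule.span_mono (Set.image_mono ?_) hmem)
      (Submodule.smul_mem _ _ (Submodule.subset_span ⟨N, N.lt_succ_self, rfl⟩))
    exact Set.Iio_subset_Iio N.le_succ

/-- Minkowski's theorem over `F[X]` for a lattice with a triangular basis. -/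
theorem exists_mem_span_natDegree_le (v : ℕ → ℕ → F[X]) (N e : ℕ)
    (hv : ∀ j < N, ∀ i, j < i → v j i = 0) (hv0 : ∀ j < N, v j j ≠ 0)
    (hdim : ∑ j ∈ Finset.range N, (v j j).natDegree < N * (e + 1)) :
    ∃ w ∈ Submodule.span F[X] (v '' Set.Iio N),
      w ≠ 0 ∧ (∀ i, N ≤ i → w i = 0) ∧ ∀ i, (w i).natDegree ≤ e := by
  let f : (Fin N → degreeLT F (e + 1)) →ₗ[F] (ℕ → F[X]) :=
    LinearMap.pi fun i => if h : i < N then (degreeLT F (e + 1)).subtype ∘ₗ LinearMap.proj ⟨i, h⟩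
      else 0
  have hf0 (x i) (hi : N ≤ i) : f x i = 0 := by
    simp [f, hi.not_gt]
  have hf1 (x) (i : Fin N) : f x i = x i := by
    simp [f]
  have : FiniteDimensional F (degreeLT F (e + 1)) :=
    Module.Finite.equiv (degreeLTEquiv F _).symm
  obtain ⟨x, hx, hmem⟩ := exists_map_mem_span_of_sum_natDegree_lt_finrank v N hv hv0 f hf0 (by
    rw [Module.finrank_pi_fintype]
    simpa [(degreeLTEquiv F (e + 1)).finrank_eq] using hdim)
  refine ⟨f x, hmem, fun h => hx ?_, hf0 x, fun i => ?_⟩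
  · funext i
    exact Subtype.ext ((hf1 x i).symm.trans (congrFun h i))
  · rcases le_or_gt N i with hi | hi
    · simp [hf0 x i hi]
    · rw [hf1 x ⟨i, hi⟩]
      exact natDegree_le_of_degree_le
        (mem_degreeLE.1 (degreeLT_succ_eq_degreeLE.le (x ⟨i, hi⟩).2))

end Lattice

section RationalFunctions

variable {C : Type*} [Field C]

theorem opK1_eq_sum (D : Module.End C (K1 C)) (q : ℕ → K1 C) (n : ℕ) :
    opK1 D q n = ∑ i ∈ Finset.range (n + 1), q i • D ^ i := rfl

theorem embK1_injective : Function.Injective (embK1 (C := C)) :=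
  IsFractionRing.injective C[X] (K1 C)

theorem embK1_ne_zero {f : C[X]} (hf : f ≠ 0) : embK1 f ≠ 0 :=
  (map_ne_zero_iff _ embK1_injective).2 hf

theorem embK1_mul (f g : C[X]) : embK1 (f * g) = embK1 f * embK1 g := map_mul _ f g

/-- The image in `C(x)` of a space of polynomials. -/
def polyK1 (S : Submodule C C[X]) : Submodule C (K1 C) :=
  S.map (IsScalarTower.toAlgHom C C[X] (K1 C)).toLinearMap

theorem mem_polyK1 {S : Submodule C C[X]} {a : K1 C} :
    a ∈ polyK1 S ↔ ∃ f ∈ S, embK1 f = a := Iff.rfl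

theorem mul_mem_polyK1_degreeLE {m n : ℕ} {f : C[X]} (hf : f.natDegree ≤ m) {a : K1 C}
    (ha : a ∈ polyK1 (degreeLE C n)) : embK1 f * a ∈ polyK1 (degreeLE C ↑(m + n)) := by
  obtain ⟨g, hg, rfl⟩ := mem_polyK1.1 ha
  refine mem_polyK1.2 ⟨f * g, mem_degreeLE.2 ?_, embK1_mul f g⟩
  exact degree_le_of_natDegree_le
    (natDegree_mul_le_of_le hf (natDegree_le_of_degree_le (mem_degreeLE.1 hg)))

/-- A contraction of the left ideal generated by an operator `L`, in terms of a triangular family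
`G` of left multipliers: it contains an operator of bounded degree as soon as the leading
coefficients `c` of the multipliers are small enough. -/
theorem exists_contraction_of_triangular [CharZero C] {D : Module.End C (K1 C)}
    (hD : ∀ a b : K1 C, D (a * b) = a * D b + D a * b)
    (hDext : ∀ f : C[X], D (embK1 f) = embK1 (derivative f))
    {ρ r d dL : ℕ} {L : Module.End C (K1 C)} (hL : L ∈ coeffOps D (polyK1 (degreeLE C dL)) (ρ + 1))
    {lc : K1 C} (hlc : lc ≠ 0) (hLead : HasLead D L ρ lc) (hρ : ρ ≤ r)
    (G : ℕ → Module.End C (K1 C)) (c : ℕ → K1 C) (hG : ∀ j, HasLead D (G j) j (c j))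
    (hc : ∀ j, c j ≠ 0)
    (hGL : ∀ j < r - ρ + 1, G j * L ∈ coeffOps D (polyK1 ⊤) (r + 1))
    (hsum : ∀ (q : C[X]) (g : ℕ → C[X]), q ≠ 0 →
      (∀ j < r - ρ + 1, embK1 (g j) = embK1 q * c j) →
      ((∑ j ∈ Finset.range (r - ρ + 1), (g j).natDegree : ℕ) : ℤ) ≤
        (r - ρ + 1 : ℕ) * ((q.natDegree : ℤ) + d - dL)) :
    ∃ (b : ℕ → C[X]) (qq : ℕ → K1 C),
      (¬ ∀ i ≤ r, b i = 0) ∧ (∀ i ≤ r, (b i).natDegree ≤ d) ∧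
      opK1 D (fun i => embK1 (b i)) r = opK1 D qq (r - ρ) * L := by
  have hX : D (embK1 X) = 1 := by
    rw [hDext, derivative_X]
    exact map_one (algebraMap C[X] (K1 C))
  have : CharZero (K1 C) := charZero_of_injective_algebraMap (algebraMap C (K1 C)).injective
  set N := r - ρ + 1 with hN
  choose a ha hGa using fun j => (hG j).exists_coeff
  obtain ⟨q, hq⟩ := IsLocalization.exist_integer_multiples (nonZeroDivisors C[X])
    (Finset.range N ×ˢ Finset.range N) fun x : ℕ × ℕ => a x.1 x.2
  have hq0 : (q : C[X]) ≠ 0 := nonZeroDivisors.ne_zero q.2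
  have hqe := embK1_ne_zero hq0
  have hv (j i : ℕ) : ∃ f : C[X], (j < i → f = 0) ∧
      (j < N → i ≤ j → embK1 f = embK1 (q : C[X]) * a j i) := by
    by_cases h : i ≤ j ∧ j < N
    · obtain ⟨f, hf⟩ := hq (j, i) (by simp; omega)
      exact ⟨f, fun h1 => by omega, fun _ _ => hf.trans (Algebra.smul_def _ _)⟩
    · exact ⟨0, fun _ => rfl, fun h1 h2 => (h ⟨h2, h1⟩).elim⟩
  choose v hv0 hv1 using hv
  have hvdiag (j) (hj : j < N) : embK1 (v j j) = embK1 (q : C[X]) * c j := by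
    rw [hv1 j j hj le_rfl, ha]
  have hvne (j) (hj : j < N) : v j j ≠ 0 := fun h0 => by
    refine mul_ne_zero hqe (hc j) ?_
    rw [← hvdiag j hj, h0]
    exact map_zero (algebraMap C[X] (K1 C))
  have hS := hsum q (fun j => v j j) hq0 hvdiag
  have hE : 0 ≤ ((q : C[X]).natDegree : ℤ) + d - dL :=
    nonneg_of_mul_nonneg_right ((Nat.cast_nonneg _).trans hS) (by positivity)
  obtain ⟨e, he⟩ := Int.eq_ofNat_of_zero_le hE
  rw [he] at hS
  obtain ⟨w, hw, hwne, hwN, hwdeg⟩ := exists_mem_span_natDegree_le v N e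
    (fun j _ i => hv0 j i) hvne (by
      have : ∑ j ∈ Finset.range N, (v j j).natDegree ≤ N * e := by exact_mod_cast hS
      rw [mul_add]
      omega)
  have hpoly : ∀ w ∈ Submodule.span C[X] (v '' Set.Iio N),
      ((embK1 (q : C[X]))⁻¹ • ∑ i ∈ Finset.range N, embK1 (w i) • D ^ i) * L ∈
        coeffOps D (polyK1 ⊤) (r + 1) := by
    intro w hw
    induction hw using Submodule.span_induction with
    | mem x hx =>
      obtain ⟨j, hj, rfl⟩ := hx
      have hj : j < N := hj
      convert hGL j hj using 2
      rw [hGa j, ← Finset.sum_subset (Finset.range_mono (show j + 1 ≤ N from hj)), Finset.smul_sum]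
      · refine Finset.sum_congr rfl fun i hi => ?_
        rw [hv1 j i hj (Nat.lt_succ_iff.1 (Finset.mem_range.1 hi)), smul_smul,
          inv_mul_cancel_left₀ hqe]
      · intro i _ hi
        rw [hv0 j i (by simpa using hi), embK1, map_zero, zero_smul]
    | zero => simp [embK1]
    | add x y _ _ hx hy =>
      convert Submodule.add_mem _ hx hy using 1
      simp [embK1, add_smul, Finset.sum_add_distrib, add_mul]
    | smul f x _ hx =>
      have := smul_mem_coeffOps (T' := polyK1 ⊤) (k := embK1 f) (by
        rintro t ⟨g, -, rfl⟩
        exact ⟨f * g, trivial, embK1_mul f g⟩) hx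
      convert this using 1
      rw [← smul_mul_assoc, smul_comm, Finset.smul_sum (r := embK1 f)]
      simp only [Pi.smul_apply, smul_eq_mul, embK1_mul, mul_smul]
  obtain ⟨b', hb', hbsum⟩ := hpoly w hw
  choose b _ hb using fun i => mem_polyK1.1 (hb' i)
  have hwL : (∑ i ∈ Finset.range N, embK1 (w i) • D ^ i) * L ∈
      coeffOps D (polyK1 (degreeLE C ↑(e + dL))) (r + 1) := by
    rw [Finset.sum_mul]
    refine Submodule.sum_mem _ fun i hi => ?_
    have hi := Finset.mem_range.1 hi
    rw [smul_mul_assoc]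
    refine smul_mem_coeffOps (fun t ht => mul_mem_polyK1_degreeLE (hwdeg i) ht)
      (coeffOps_mono D _ (show ρ + 1 + i ≤ r + 1 by omega) (pow_mul_mem_coeffOps hD ?_ hL i))
    rintro t ht
    obtain ⟨g, hg, rfl⟩ := mem_polyK1.1 ht
    exact mem_polyK1.2 ⟨derivative g, mem_degreeLE.2 (degree_derivative_le.trans
      (mem_degreeLE.1 hg)), (hDext g).symm⟩
  obtain ⟨u, hu, husum⟩ := hwL
  have hub : ∀ i < r + 1, u i = embK1 (q : C[X]) * b' i := by
    refine coeff_eq_of_sum_smul_pow_eq (b := fun i => embK1 (q : C[X]) * b' i) hD hX ?_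
    simp only [mul_smul]
    rw [← Finset.smul_sum, ← hbsum, ← husum, ← smul_mul_assoc, smul_smul, mul_inv_cancel₀ hqe,
      one_smul]
  have hbop : opK1 D (fun i => embK1 (b i)) r =
      ((embK1 (q : C[X]))⁻¹ • ∑ i ∈ Finset.range N, embK1 (w i) • D ^ i) * L := by
    rw [hbsum, opK1_eq_sum]
    simp only [hb]
  refine ⟨b, fun i => (embK1 (q : C[X]))⁻¹ * embK1 (w i), fun h0 => ?_, fun i hi => ?_, ?_⟩
  · have h1 : (∑ i ∈ Finset.range N, embK1 (w i) • D ^ i) ≠ 0 := fun h => hwne <| funext fun i => by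
      rcases le_or_gt N i with hi | hi
      · exact hwN i hi
      · exact embK1_injective ((coeff_eq_zero_of_sum_smul_pow_eq_zero hD hX h i hi).trans
          (map_zero (algebraMap C[X] (K1 C))).symm)
    obtain ⟨m, k, hk, hm⟩ := exists_hasLead_of_ne_zero
      ⟨fun i => embK1 (w i), fun _ => Submodule.mem_top, rfl⟩ h1
    refine ((hm.smul (embK1 (q : C[X]))⁻¹).mul hD hLead).ne_zero hD hX
      (mul_ne_zero (mul_ne_zero (inv_ne_zero hqe) hk) hlc) ?_
    rw [← hbop, opK1_eq_sum]
    refine Finset.sum_eq_zero fun i hi => ?_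
    rw [h0 i (Nat.lt_succ_iff.1 (Finset.mem_range.1 hi)), embK1, map_zero, zero_smul]
  · rcases eq_or_ne (b i) 0 with h0 | h0
    · simp [h0]
    · obtain ⟨f, hf, hfu⟩ := mem_polyK1.1 (hu i)
      have h1 := hub i (by omega)
      rw [← hfu, ← hb, ← embK1_mul] at h1
      have h2 := natDegree_le_of_degree_le (mem_degreeLE.1 hf)
      rw [embK1_injective h1, natDegree_mul hq0 h0] at h2
      omega
  · rw [hbop, opK1_eq_sum, Finset.smul_sum]
    simp only [mul_smul, ← hN]

end RationalFunctions

end Auxiliary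

/-- Univariate order–degree curve for contraction ideals (differential case, one
removable operator; Theorem 9 of Chen–Jaroschek–Kauers–Singer for `m = 1`).
Here `D` is the unique derivation of `C(x)` extending `d/dx` on `C[x]`.
If `p·L_1 = P∘L` with `deg p > deg (lc P)`, `r ≥ ρ_1`, and
`(r+1−ρ)(d−d_L) + (r+1−ρ_1)(deg p − deg P_s) ≥ 0`, then `Con⟨L⟩` contains a nonzero
element of order at most `r` and degree at most `d`. -/
theorem contraction_ideal_order_degree_curve_univariate
    (C : Type*) [Field C] [CharZero C]
    (D : Module.End C (K1 C))
    (hLeib : ∀ a b : K1 C, D (a * b) = a * D b + D a * b)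
    (hDext : ∀ f : Polynomial C, D (embK1 f) = embK1 (Polynomial.derivative f))
    -- the operator L of order ρ and its coefficient degrees
    (ρ : ℕ) (l : ℕ → Polynomial C) (hl : l ρ ≠ 0)
    (dL : ℕ) (hdL : dL = (Finset.range (ρ + 1)).sup fun i => (l i).natDegree)
    -- the operator L₁ ∈ Con⟨L⟩ of order ρ₁ > ρ
    (ρ₁ : ℕ) (l' : ℕ → Polynomial C) (hl' : l' ρ₁ ≠ 0) (hρ : ρ < ρ₁)
    -- p and P with p·L₁ = P∘L and deg p > deg (lc P)
    (p : Polynomial C) (hp : p ≠ 0)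
    (s : ℕ) (PP : ℕ → Polynomial C) (hPPs : PP s ≠ 0)
    (hfact : mulK1 (embK1 p) ∘ₗ opK1 D (fun i => embK1 (l' i)) ρ₁ =
      opK1 D (fun i => embK1 (PP i)) s ∘ₗ opK1 D (fun i => embK1 (l i)) ρ)
    (hdeg : (PP s).natDegree < p.natDegree)
    -- the point (r, d)
    (r d : ℕ) (hr : ρ₁ ≤ r)
    (hineq : (0 : ℤ) ≤ ((r : ℤ) + 1 - ρ) * ((d : ℤ) - dL)
      + ((r : ℤ) + 1 - ρ₁) * ((p.natDegree : ℤ) - ((PP s).natDegree : ℤ))) :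
    ∃ (b : ℕ → Polynomial C) (qq : ℕ → K1 C),
      (¬ ∀ i ≤ r, b i = 0) ∧
      (∀ i ≤ r, (b i).natDegree ≤ d) ∧
      opK1 D (fun i => embK1 (b i)) r =
        opK1 D qq (r - ρ) ∘ₗ opK1 D (fun i => embK1 (l i)) ρ := by
  have hX : D (embK1 Polynomial.X) = 1 := by
    rw [hDext, Polynomial.derivative_X]
    exact map_one (algebraMap (Polynomial C) (K1 C))
  have : CharZero (K1 C) := charZero_of_injective_algebraMap (algebraMap C (K1 C)).injective
  have hpe := embK1_ne_zero hp
  set L := opK1 D (fun i => embK1 (l i)) ρ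
  set L₁ := opK1 D (fun i => embK1 (l' i)) ρ₁
  set P := opK1 D (fun i => embK1 (PP i)) s
  have hfact : embK1 p • L₁ = P * L := hfact
  have hL : HasLead D L ρ (embK1 (l ρ)) := hasLead_sum D _ ρ
  have hL₁ : HasLead D L₁ ρ₁ (embK1 (l' ρ₁)) := hasLead_sum D _ ρ₁
  have hP : HasLead D P s (embK1 (PP s)) := hasLead_sum D _ s
  have hPL := hP.mul hLeib hL
  rw [← hfact] at hPL
  have hpL₁ := hL₁.smul (embK1 p)
  have hs : s + ρ = ρ₁ := le_antisymm
    (hpL₁.le_of_hasLead hLeib hX hPL (mul_ne_zero (embK1_ne_zero hPPs) (embK1_ne_zero hl)))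
    (hPL.le_of_hasLead hLeib hX hpL₁ (mul_ne_zero hpe (embK1_ne_zero hl')))
  have hstable : ∀ t ∈ polyK1 (C := C) ⊤, D t ∈ polyK1 (C := C) ⊤ := by
    rintro _ ⟨f, -, rfl⟩
    exact mem_polyK1.2 ⟨Polynomial.derivative f, trivial, (hDext f).symm⟩
  have hmem (a : ℕ → Polynomial C) (n : ℕ) :
      opK1 D (fun i => embK1 (a i)) n ∈ coeffOps D (polyK1 ⊤) (n + 1) :=
    ⟨_, fun i => mem_polyK1.2 ⟨a i, trivial, rfl⟩, rfl⟩
  refine exists_contraction_of_triangular hLeib hDext (dL := dL) (L := L) ?_ (embK1_ne_zero hl) hL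
    (by omega) (fun j => if j < s then D ^ j else D ^ (j - s) * ((embK1 p)⁻¹ • P))
    (fun j => if j < s then 1 else (embK1 p)⁻¹ * embK1 (PP s)) (fun j => ?_) (fun j => ?_)
    (fun j hj => ?_) (fun q g hq hg => ?_)
  · refine Submodule.sum_mem _ fun i hi => smul_pow_mem_coeffOps D (Finset.mem_range.1 hi) ?_
    refine mem_polyK1.2 ⟨l i, Polynomial.mem_degreeLE.2
      (Polynomial.degree_le_of_natDegree_le ?_), rfl⟩
    rw [hdL]
    exact Finset.le_sup (f := fun i => (l i).natDegree) hi
  · split_ifs with h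
    · simp [HasLead]
    · have := (hP.smul (embK1 p)⁻¹).pow_mul hLeib (j - s)
      rwa [Nat.add_sub_cancel' (not_lt.1 h)] at this
  · split_ifs
    · exact one_ne_zero
    · exact mul_ne_zero (inv_ne_zero hpe) (embK1_ne_zero hPPs)
  · split_ifs with h
    · exact coeffOps_mono D _ (by omega) (pow_mul_mem_coeffOps hLeib hstable (hmem l ρ) j)
    · rw [mul_assoc, smul_mul_assoc, ← hfact, smul_smul, inv_mul_cancel₀ hpe, one_smul]
      exact coeffOps_mono D _ (by omega)
        (pow_mul_mem_coeffOps hLeib hstable (hmem l' ρ₁) (j - s))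
  · obtain ⟨m, hm⟩ : ∃ m, r - ρ + 1 = s + m := Nat.exists_eq_add_of_le (by omega)
    have h1 (j) (hj : j ∈ Finset.range s) : ((g j).natDegree : ℤ) = q.natDegree := by
      have hj := Finset.mem_range.1 hj
      have := hg j (by omega)
      rw [if_pos hj, mul_one] at this
      rw [embK1_injective this]
    have h2 (j) (hj : j ∈ Finset.range m) : ((g (s + j)).natDegree : ℤ) =
        q.natDegree - (p.natDegree - (PP s).natDegree) := by
      have hj := Finset.mem_range.1 hj
      have h3 := hg (s + j) (by omega)
      rw [if_neg (by omega), mul_left_comm, eq_inv_mul_iff_mul_eq₀ hpe, ← embK1_mul,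
        ← embK1_mul] at h3
      have h4 := embK1_injective h3
      have hg0 : g (s + j) ≠ 0 := by
        rintro h0
        rw [h0, mul_zero] at h4
        exact mul_ne_zero hq hPPs h4.symm
      have h5 := congrArg Polynomial.natDegree h4
      rw [Polynomial.natDegree_mul hp hg0, Polynomial.natDegree_mul hq hPPs] at h5
      omega
    rw [hm, Nat.cast_sum, Finset.sum_range_add, Finset.sum_congr rfl h1, Finset.sum_congr rfl h2]
    simp only [Finset.sum_const, Finset.card_range, nsmul_eq_mul]
    have e1 : (r : ℤ) + 1 - ρ = s + m := by omega
    have e2 : (r : ℤ) + 1 - ρ₁ = m := by omega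
    rw [e1, e2] at hineq
    push_cast
    linarith

end
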